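/- Fourth-order three-body error term (paper eq. A18a): for pairwise distinct indices i, j, k and any phase-space point (x,p) with r_ij ≠ 0 and r_ik ≠ 0, the left-nested canonical Poisson bracket satisfies {{{{V_ij, T}, T}, T}, V_ik}(x,p) = −9 (G² (m i)(m j)(m k) / (r_ij⁷ r_ik³)) · ( (x_ij · x_ik) [ 5 (v_ij · x_ij)² − r_ij² ‖v_ij‖² ] − 2 r_ij² (x_ij · v_ij)(x_ik · v_ij) ). -/

import Mathlib

open scoped RealInnerProductSpace BigOperators

noncomputable section

/-- Three-dimensional Euclidean space. -/
abbrev E3 : Type := EuclideanSpace ℝ (Fin 3)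

/-- Phase space for `N` particles: positions and momenta. -/
abbrev Phase (N : ℕ) : Type := (Fin N → E3) × (Fin N → E3)

/-- Gradient of a phase-space function with respect to the `k`-th position. -/
def gradPos {N : ℕ} (A : Phase N → ℝ) (k : Fin N) (w : Phase N) : E3 :=
  gradient (fun y => A (Function.update w.1 k y, w.2)) (w.1 k)

/-- Gradient of a phase-space function with respect to the `k`-th momentum. -/
def gradMom {N : ℕ} (A : Phase N → ℝ) (k : Fin N) (w : Phase N) : E3 :=
  gradient (fun y => A (w.1, Function.update w.2 k y)) (w.2 k)

/-- Canonical Poisson bracket of two phase-space functions. -/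
def poisson {N : ℕ} (A B : Phase N → ℝ) (w : Phase N) : ℝ :=
  ∑ k, (⟪gradPos A k w, gradMom B k w⟫ - ⟪gradMom A k w, gradPos B k w⟫)

/-- Kinetic energy `T = Σ_i ‖p_i‖²/(2 m_i)`. -/
def kinetic {N : ℕ} (m : Fin N → ℝ) (w : Phase N) : ℝ :=
  ∑ i, ‖w.2 i‖ ^ 2 / (2 * m i)

/-- Pair potential `V_ij = −G m_i m_j / ‖x_i − x_j‖`. -/
def pairPot {N : ℕ} (G : ℝ) (m : Fin N → ℝ) (i j : Fin N) (w : Phase N) : ℝ :=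
  -(G * m i * m j) / ‖w.1 i - w.1 j‖

/-!
A function of the relative position `x` and relative velocity `v` of particles `i` and `j` is
differentiated by `{·, T}` along free motion: `{F(x, v), T} = ⟪∇ₓF(x, v), v⟫`. Three such
derivatives of `-K / ‖x‖` give `K (15 ‖x‖⁻⁷ ⟪x, v⟫³ - 9 ‖x‖⁻⁵ ‖v‖² ⟪x, v⟫)`. In the bracket of
such a function with a potential `U(x_ik)` only particle `i` belongs to both pairs, so the bracket
is `-(m i)⁻¹ ⟪∇ᵥF, ∇U⟫`.
-/

section GradientCalculus

variable {E : Type*} [NormedAddCommGroup E] [InnerProductSpace ℝ E] [CompleteSpace E]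

lemma hasGradientAt_of_hasFDerivAt {f : E → ℝ} {f' : E →L[ℝ] ℝ} {a x : E}
    (hf : HasFDerivAt f f' x) (ha : ∀ u, ⟪a, u⟫ = f' u) : HasGradientAt f a x := by
  rw [hasGradientAt_iff_hasFDerivAt]
  convert! hf using 1
  ext u
  simpa using ha u

lemma hasGradientAt_sub {f g : E → ℝ} {a b x : E} (hf : HasGradientAt f a x)
    (hg : HasGradientAt g b x) : HasGradientAt (fun y => f y - g y) (a - b) x :=
  hasGradientAt_of_hasFDerivAt (hf.hasFDerivAt.fun_sub hg.hasFDerivAt) fun u => by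
    simp [inner_sub_left]

lemma hasGradientAt_add_const {f : E → ℝ} {a x : E} (hf : HasGradientAt f a x) (c : ℝ) :
    HasGradientAt (fun y => f y + c) a x :=
  hasGradientAt_of_hasFDerivAt (hf.hasFDerivAt.add_const c) fun u => by simp

lemma hasGradientAt_mul {f g : E → ℝ} {a b x : E} (hf : HasGradientAt f a x)
    (hg : HasGradientAt g b x) : HasGradientAt (fun y => f y * g y) (f x • b + g x • a) x :=
  hasGradientAt_of_hasFDerivAt (hf.hasFDerivAt.mul hg.hasFDerivAt) fun u => by
    simp [inner_add_left, real_inner_smul_left]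

lemma hasGradientAt_const_mul {f : E → ℝ} {a x : E} (c : ℝ) (hf : HasGradientAt f a x) :
    HasGradientAt (fun y => c * f y) (c • a) x :=
  hasGradientAt_of_hasFDerivAt (hf.hasFDerivAt.const_mul c) fun u => by
    simp [real_inner_smul_left]

lemma hasGradientAt_comp {f : E → ℝ} {φ : ℝ → ℝ} {φ' : ℝ} {a x : E}
    (hφ : HasDerivAt φ φ' (f x)) (hf : HasGradientAt f a x) :
    HasGradientAt (fun y => φ (f y)) (φ' • a) x :=
  hasGradientAt_of_hasFDerivAt (hφ.comp_hasFDerivAt x hf.hasFDerivAt) fun u => by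
    simp [real_inner_smul_left]

lemma hasGradientAt_inner_left (v x : E) : HasGradientAt (fun y => ⟪y, v⟫) v x :=
  hasGradientAt_of_hasFDerivAt ((hasFDerivAt_id x).inner ℝ (hasFDerivAt_const v x)) fun u => by
    simp [real_inner_comm]

lemma hasGradientAt_norm_sq (x : E) : HasGradientAt (fun y => ‖y‖ ^ 2) ((2 : ℝ) • x) x :=
  hasGradientAt_of_hasFDerivAt (hasStrictFDerivAt_norm_sq x).hasFDerivAt fun u => by
    simp [real_inner_smul_left]

lemma hasGradientAt_norm {x : E} (hx : x ≠ 0) :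
    HasGradientAt (fun y => ‖y‖) (‖x‖⁻¹ • x) x := by
  have hsqrt := hasGradientAt_comp (Real.hasDerivAt_sqrt (by positivity)) (hasGradientAt_norm_sq x)
  convert! hsqrt using 1
  · simp
  · rw [Real.sqrt_sq (norm_nonneg x), smul_smul]
    congr 1
    ring

lemma hasGradientAt_norm_zpow (n : ℤ) {x : E} (hx : x ≠ 0) :
    HasGradientAt (fun y => ‖y‖ ^ n) ((n * ‖x‖ ^ (n - 2)) • x) x := by
  have hnorm : ‖x‖ ≠ 0 := norm_ne_zero_iff.mpr hx
  convert! hasGradientAt_comp (hasDerivAt_zpow n ‖x‖ (.inl hnorm)) (hasGradientAt_norm hx) using 1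
  rw [smul_smul, mul_assoc, ← zpow_sub_one₀ hnorm]
  ring_nf

lemma hasGradientAt_neg_mul_norm_zpow_neg_one (c : ℝ) {x : E} (hx : x ≠ 0) :
    HasGradientAt (fun y => -c * ‖y‖ ^ (-1 : ℤ)) ((c * ‖x‖ ^ (-3 : ℤ)) • x) x := by
  convert! hasGradientAt_const_mul (-c) (hasGradientAt_norm_zpow (-1) hx) using 1
  push_cast
  module

lemma hasGradientAt_inner_pow (n : ℕ) (v x : E) :
    HasGradientAt (fun y => ⟪y, v⟫ ^ n) ((n * ⟪x, v⟫ ^ (n - 1)) • v) x :=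
  hasGradientAt_comp (hasDerivAt_pow n _) (hasGradientAt_inner_left v x)

lemma hasGradientAt_inner_cube_sub_norm_sq_mul_inner (α β : ℝ) (v x : E) :
    HasGradientAt (fun y => α * ⟪y, v⟫ ^ 3 - β * (‖y‖ ^ 2 * ⟪y, v⟫))
      ((3 * α * ⟪x, v⟫ ^ 2 - β * ‖x‖ ^ 2) • v - (2 * β * ⟪x, v⟫) • x) x := by
  have hcube := hasGradientAt_const_mul α (hasGradientAt_inner_pow 3 v x)
  have hmul := hasGradientAt_mul (hasGradientAt_norm_sq x) (hasGradientAt_inner_left v x)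
  convert! hasGradientAt_sub hcube (hasGradientAt_const_mul β hmul) using 1
  push_cast
  module

lemma hasGradientAt_comp_smul_update_sub_smul_update {ι : Type*} [Finite ι] [DecidableEq ι]
    {f : E → ℝ} {g : E} {a b : ℝ} {q : ι → E} {i j : ι}
    (hf : HasGradientAt f g (a • q i - b • q j)) (k : ι) :
    HasGradientAt (fun y => f (a • Function.update q k y i - b • Function.update q k y j))
      ((Pi.single i (a • g) - Pi.single j (b • g) : ι → E) k) (q k) := by
  have := Fintype.ofFinite ι
  have hupdate := hasFDerivAt_pi.mp (hasFDerivAt_update (𝕜 := ℝ) q (i := k) (q k))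
  have hcomb := ((hupdate i).const_smul a).fun_sub ((hupdate j).const_smul b)
  have hf' := hf.hasFDerivAt
  rw [← Function.update_eq_self k q] at hf'
  refine hasGradientAt_of_hasFDerivAt (hf'.comp (q k) hcomb) fun u => ?_
  by_cases hi : i = k <;> by_cases hj : j = k <;>
    simp [hi, hj, inner_sub_left, real_inner_smul_left]

end GradientCalculus

lemma sum_inner_single_left {𝕜 ι E : Type*} [RCLike 𝕜] [Fintype ι] [DecidableEq ι]
    [SeminormedAddCommGroup E] [InnerProductSpace 𝕜 E] (i : ι) (a : E) (b : ι → E) :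
    ∑ k, inner 𝕜 ((Pi.single i a : ι → E) k) (b k) = inner 𝕜 a (b i) := by
  rw [Fintype.sum_eq_single i fun k hk => by simp [hk], Pi.single_eq_same]

section PairFunctions

variable {N : ℕ} {m : Fin N → ℝ} {i j : Fin N} {A : Phase N → ℝ} {F : E3 → E3 → ℝ}

/-- Relative velocity `v_ij = p_i / m_i - p_j / m_j`, as a function of the momenta. -/
def relVel (m : Fin N → ℝ) (i j : Fin N) (p : Fin N → E3) : E3 :=
  (m i)⁻¹ • p i - (m j)⁻¹ • p j

/-- `A = F(x_ij, v_ij)`: the phase-space function `A` depends only on the relative position and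
velocity of particles `i` and `j`. Nothing is required at collisions `x_i = x_j`, where the
potential is singular. -/
def IsPairFunction (m : Fin N → ℝ) (i j : Fin N) (A : Phase N → ℝ) (F : E3 → E3 → ℝ) : Prop :=
  ∀ w : Phase N, w.1 i - w.1 j ≠ 0 → A w = F (w.1 i - w.1 j) (relVel m i j w.2)

lemma IsPairFunction.gradPos_eq (hA : IsPairFunction m i j A F) {w : Phase N}
    (hw : w.1 i - w.1 j ≠ 0) {g : E3}
    (hF : HasGradientAt (fun x => F x (relVel m i j w.2)) g (w.1 i - w.1 j)) (k : Fin N) :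
    gradPos A k w = (Pi.single i g - Pi.single j g : Fin N → E3) k := by
  have hpair := hasGradientAt_comp_smul_update_sub_smul_update (a := 1) (b := 1) (q := w.1)
    (i := i) (j := j) (by simpa only [one_smul] using hF) k
  simp only [one_smul] at hpair
  have hcont : Continuous fun y => Function.update w.1 k y i - Function.update w.1 k y j := by
    fun_prop
  have hne := hcont.continuousAt.eventually_ne (x := w.1 k) (by simpa using hw)
  exact (hpair.congr_of_eventuallyEq (hne.mono fun y hy => hA (_, w.2) hy)).gradient

lemma IsPairFunction.gradMom_eq (hA : IsPairFunction m i j A F) {w : Phase N}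
    (hw : w.1 i - w.1 j ≠ 0) {g : E3}
    (hF : HasGradientAt (F (w.1 i - w.1 j)) g (relVel m i j w.2)) (k : Fin N) :
    gradMom A k w =
      (Pi.single i ((m i)⁻¹ • g) - Pi.single j ((m j)⁻¹ • g) : Fin N → E3) k :=
  ((hasGradientAt_comp_smul_update_sub_smul_update hF k).congr_of_eventuallyEq
    (.of_forall fun y => hA (w.1, Function.update w.2 k y) hw)).gradient

lemma gradPos_kinetic (m : Fin N → ℝ) (k : Fin N) (w : Phase N) : gradPos (kinetic m) k w = 0 :=
  gradient_fun_const (w.1 k) (kinetic m w)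

lemma gradMom_kinetic (m : Fin N → ℝ) (k : Fin N) (w : Phase N) :
    gradMom (kinetic m) k w = (m k)⁻¹ • w.2 k := by
  have hsplit (y : E3) : kinetic m (w.1, Function.update w.2 k y) =
      (2 * m k)⁻¹ * ‖y‖ ^ 2 + ∑ l ∈ Finset.univ.erase k, ‖w.2 l‖ ^ 2 / (2 * m l) := by
    rw [kinetic, ← Finset.add_sum_erase _ _ (Finset.mem_univ k)]
    congr 1
    · simp [div_eq_inv_mul]
    · refine Finset.sum_congr rfl fun l hl => ?_
      simp [Function.update_of_ne (Finset.ne_of_mem_erase hl)]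
  have hgrad := hasGradientAt_add_const
    (hasGradientAt_const_mul (2 * m k)⁻¹ (hasGradientAt_norm_sq (w.2 k)))
    (∑ l ∈ Finset.univ.erase k, ‖w.2 l‖ ^ 2 / (2 * m l))
  rw [gradMom, funext hsplit, hgrad.gradient, smul_smul]
  congr 1
  ring

lemma IsPairFunction.poisson_kinetic (hA : IsPairFunction m i j A F) {g : E3 → E3 → E3}
    (hF : ∀ x v, x ≠ 0 → HasGradientAt (fun x => F x v) (g x v) x) :
    IsPairFunction m i j (poisson A (kinetic m)) fun x v => ⟪g x v, v⟫ := by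
  intro w hw
  simp only [poisson, gradPos_kinetic, gradMom_kinetic, hA.gradPos_eq hw (hF _ _ hw),
    inner_zero_right, sub_zero, Pi.sub_apply, inner_sub_left, Finset.sum_sub_distrib,
    sum_inner_single_left, relVel, inner_sub_right]

lemma IsPairFunction.congr {F' : E3 → E3 → ℝ} (hA : IsPairFunction m i j A F)
    (hF : ∀ x v, x ≠ 0 → F x v = F' x v) : IsPairFunction m i j A F' :=
  fun w hw => (hA w hw).trans (hF _ _ hw)

lemma IsPairFunction.poisson_potential {k : Fin N} (hij : i ≠ j) (hik : i ≠ k) (hjk : j ≠ k)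
    {B : Phase N → ℝ} {U : E3 → ℝ} (hA : IsPairFunction m i j A F)
    (hB : IsPairFunction m i k B fun x _ => U x) {w : Phase N}
    (hxij : w.1 i - w.1 j ≠ 0) (hxik : w.1 i - w.1 k ≠ 0) {a b : E3}
    (hF : HasGradientAt (F (w.1 i - w.1 j)) a (relVel m i j w.2))
    (hU : HasGradientAt U b (w.1 i - w.1 k)) :
    poisson A B w = -((m i)⁻¹ * ⟪a, b⟫) := by
  have hmom := hB.gradMom_eq hxik (hasGradientAt_const _ _)
  simp only [poisson, hmom, hA.gradMom_eq hxij hF, hB.gradPos_eq hxik hU, smul_zero,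
    Pi.single_zero, sub_self, Pi.zero_apply, inner_zero_right, zero_sub, Finset.sum_neg_distrib]
  simp [inner_sub_left, Finset.sum_sub_distrib, sum_inner_single_left, hij.symm, hik, hjk,
    real_inner_smul_left]

end PairFunctions

section NewtonianPotential

variable {N : ℕ} (G : ℝ) (m : Fin N → ℝ) (i j : Fin N)

lemma isPairFunction_pairPot :
    IsPairFunction m i j (pairPot G m i j) fun x _ => -(G * m i * m j) * ‖x‖ ^ (-1 : ℤ) :=
  fun _ _ => by simp [pairPot, div_eq_mul_inv]

lemma isPairFunction_poisson_pairPot_kinetic :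
    IsPairFunction m i j (poisson (pairPot G m i j) (kinetic m)) fun x v =>
      G * m i * m j * (‖x‖ ^ (-3 : ℤ) * ⟪x, v⟫) :=
  ((isPairFunction_pairPot G m i j).poisson_kinetic fun _ _ hx =>
    hasGradientAt_neg_mul_norm_zpow_neg_one _ hx).congr fun x v _ => by
      rw [real_inner_smul_left, mul_assoc]

lemma isPairFunction_poisson_poisson_pairPot_kinetic :
    IsPairFunction m i j (poisson (poisson (pairPot G m i j) (kinetic m)) (kinetic m)) fun x v =>
      G * m i * m j * (‖x‖ ^ (-3 : ℤ) * ‖v‖ ^ 2 - 3 * (‖x‖ ^ (-5 : ℤ) * ⟪x, v⟫ ^ 2)) := by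
  have hgrad (x v : E3) (hx : x ≠ 0) :
      HasGradientAt (fun x => G * m i * m j * (‖x‖ ^ (-3 : ℤ) * ⟪x, v⟫))
        ((G * m i * m j) • (‖x‖ ^ (-3 : ℤ) • v - (3 * ‖x‖ ^ (-5 : ℤ) * ⟪x, v⟫) • x)) x := by
    convert! hasGradientAt_const_mul (G * m i * m j) (hasGradientAt_mul
      (hasGradientAt_norm_zpow (-3) hx) (hasGradientAt_inner_left v x)) using 1
    push_cast
    module
  refine ((isPairFunction_poisson_pairPot_kinetic G m i j).poisson_kinetic hgrad).congr
    fun x v _ => ?_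
  simp only [real_inner_smul_left, inner_sub_left, real_inner_self_eq_norm_sq]
  ring

lemma isPairFunction_poisson_poisson_poisson_pairPot_kinetic :
    IsPairFunction m i j
      (poisson (poisson (poisson (pairPot G m i j) (kinetic m)) (kinetic m)) (kinetic m))
      fun x v => G * m i * m j *
        (15 * ‖x‖ ^ (-7 : ℤ) * ⟪v, x⟫ ^ 3 - 9 * ‖x‖ ^ (-5 : ℤ) * (‖v‖ ^ 2 * ⟪v, x⟫)) := by
  have hgrad (x v : E3) (hx : x ≠ 0) :
      HasGradientAt (fun x => G * m i * m j *
          (‖x‖ ^ (-3 : ℤ) * ‖v‖ ^ 2 - 3 * (‖x‖ ^ (-5 : ℤ) * ⟪x, v⟫ ^ 2)))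
        ((G * m i * m j) •
          ((15 * ‖x‖ ^ (-7 : ℤ) * ⟪x, v⟫ ^ 2 - 3 * ‖x‖ ^ (-5 : ℤ) * ‖v‖ ^ 2) • x -
            (6 * ‖x‖ ^ (-5 : ℤ) * ⟪x, v⟫) • v)) x := by
    convert! hasGradientAt_const_mul (G * m i * m j) (hasGradientAt_sub
      (hasGradientAt_mul (hasGradientAt_norm_zpow (-3) hx) (hasGradientAt_const x (‖v‖ ^ 2)))
      (hasGradientAt_const_mul 3 (hasGradientAt_mul (hasGradientAt_norm_zpow (-5) hx)
        (hasGradientAt_inner_pow 2 v x)))) using 1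
    push_cast
    module
  refine ((isPairFunction_poisson_poisson_pairPot_kinetic G m i j).poisson_kinetic hgrad).congr
    fun x v _ => ?_
  simp only [real_inner_smul_left, inner_sub_left, real_inner_self_eq_norm_sq, real_inner_comm x v]
  ring

end NewtonianPotential

/-- Fourth-order three-body error term (paper eq. A18a):
`{{{{V_ij,T},T},T},V_ik} = −9 (G² m_i m_j m_k / (r_ij⁷ r_ik³))
  ((x_ij·x_ik)[5(v_ij·x_ij)² − r_ij² v_ij²] − 2 r_ij²(x_ij·v_ij)(x_ik·v_ij))`. -/
theorem fourth_order_VTTTV_three_body {N : ℕ} (G : ℝ) (hG : 0 < G)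
    (m : Fin N → ℝ) (hm : ∀ i, 0 < m i) (i j k : Fin N)
    (hij : i ≠ j) (hik : i ≠ k) (hjk : j ≠ k) (w : Phase N)
    (hrij : ‖w.1 i - w.1 j‖ ≠ 0) (hrik : ‖w.1 i - w.1 k‖ ≠ 0)
    (xij xik vij : E3)
    (hxij : xij = w.1 i - w.1 j) (hxik : xik = w.1 i - w.1 k)
    (hv : vij = (m i)⁻¹ • w.2 i - (m j)⁻¹ • w.2 j) :
    poisson (poisson (poisson (poisson (pairPot G m i j) (kinetic m))
        (kinetic m)) (kinetic m)) (pairPot G m i k) w =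
      -9 * (G ^ 2 * m i * m j * m k / (‖xij‖ ^ 7 * ‖xik‖ ^ 3)) *
        (⟪xij, xik⟫ * (5 * ⟪vij, xij⟫ ^ 2 - ‖xij‖ ^ 2 * ‖vij‖ ^ 2) -
          2 * ‖xij‖ ^ 2 * ⟪xij, vij⟫ * ⟪xik, vij⟫) := by
  subst hxij hxik hv
  have hxij := norm_ne_zero_iff.mp hrij
  have hxik := norm_ne_zero_iff.mp hrik
  have hmi := (hm i).ne'
  have hVTTT := isPairFunction_poisson_poisson_poisson_pairPot_kinetic G m i j
  have hV := isPairFunction_pairPot G m i k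
  rw [← relVel]
  set x := w.1 i - w.1 j
  set y := w.1 i - w.1 k
  set v := relVel m i j w.2
  have hgradVTTT := hasGradientAt_const_mul (G * m i * m j)
    (hasGradientAt_inner_cube_sub_norm_sq_mul_inner
      (15 * ‖x‖ ^ (-7 : ℤ)) (9 * ‖x‖ ^ (-5 : ℤ)) x v)
  have hgradV := hasGradientAt_neg_mul_norm_zpow_neg_one (G * m i * m k) hxik
  rw [hVTTT.poisson_potential hij hik hjk hV hxij hxik hgradVTTT hgradV]
  simp only [inner_sub_left, real_inner_smul_left, real_inner_smul_right, real_inner_comm v]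
  field_simp
  ring
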